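/- Let n ≥ 2 and 1 ≤ m < n. In the hyperoctahedral group B_n, let W_P = {w ∈ B_n : w(1) = 1} and W_Q = {w ∈ B_n : w({1,…,m}) = {1,…,m}}. Then each of the three sets E_0 = {w : w(j) = −1 for some 1 ≤ j ≤ m}, E_1 = {w : w(j) ∉ {1, −1} for all 1 ≤ j ≤ m}, E_2 = {w : w(j) = 1 for some 1 ≤ j ≤ m} is nonempty and is a single (W_P, W_Q) double coset; in particular these three sets partition B_n and are exactly the (W_P, W_Q) double cosets. -/

import Mathlib

/-- The set `{−n, …, −1, 1, …, n}` of signed indices. -/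
def SIdx (n : ℕ) : Type := {x : ℤ // x ≠ 0 ∧ x.natAbs ≤ n}

instance (n : ℕ) : Neg (SIdx n) :=
  ⟨fun x => ⟨-x.1, ⟨neg_ne_zero.mpr x.2.1, by simpa using x.2.2⟩⟩⟩

/-- Membership in the hyperoctahedral group `B_n`: a permutation `w` of
`{−n, …, −1, 1, …, n}` satisfying `w(−x) = −w(x)` for all `x`. -/
def IsSignedPerm {n : ℕ} (w : Equiv.Perm (SIdx n)) : Prop :=
  ∀ x : SIdx n, w (-x) = -(w x)

/-- `W_P = {w ∈ B_n : w(1) = 1}`. -/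
def InWP {n : ℕ} (h : Equiv.Perm (SIdx n)) : Prop :=
  IsSignedPerm h ∧ ∀ x : SIdx n, x.1 = 1 → (h x).1 = 1

/-- `W_Q = {w ∈ B_n : w({1,…,m}) = {1,…,m}}`. -/
def InWQ {n : ℕ} (m : ℕ) (k : Equiv.Perm (SIdx n)) : Prop :=
  IsSignedPerm k ∧
    ⇑k '' {x : SIdx n | 0 < x.1 ∧ x.1 ≤ (m : ℤ)} = {x : SIdx n | 0 < x.1 ∧ x.1 ≤ (m : ℤ)}

/-- `w` and `w'` lie in the same `(W_P, W_Q)` double coset. -/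
def SameDC {n : ℕ} (m : ℕ) (w w' : Equiv.Perm (SIdx n)) : Prop :=
  ∃ h k : Equiv.Perm (SIdx n), InWP h ∧ InWQ m k ∧ w' = h * w * k

/-- `E_0 = {w : w(j) = −1 for some 1 ≤ j ≤ m}`. -/
def InE0 {n : ℕ} (m : ℕ) (w : Equiv.Perm (SIdx n)) : Prop :=
  ∃ j : SIdx n, 0 < j.1 ∧ j.1 ≤ (m : ℤ) ∧ (w j).1 = -1

/-- `E_1 = {w : w(j) ∉ {1, −1} for all 1 ≤ j ≤ m}`. -/
def InE1 {n : ℕ} (m : ℕ) (w : Equiv.Perm (SIdx n)) : Prop :=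
  ∀ j : SIdx n, 0 < j.1 → j.1 ≤ (m : ℤ) → (w j).1 ≠ 1 ∧ (w j).1 ≠ -1

/-- `E_2 = {w : w(j) = 1 for some 1 ≤ j ≤ m}`. -/
def InE2 {n : ℕ} (m : ℕ) (w : Equiv.Perm (SIdx n)) : Prop :=
  ∃ j : SIdx n, 0 < j.1 ∧ j.1 ≤ (m : ℤ) ∧ (w j).1 = 1

/-!
Both subgroups are stabilizers: `W_P` of the point `1`, and `W_Q` of the set `{1, …, m}`. Hence
`w ↦ w⁻¹(1)` identifies the double cosets `W_P w W_Q` with the orbits of `W_Q` on the signed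
indices. Signed transpositions show that these orbits are `{1, …, m}`, `{-1, …, -m}` and the rest,
so the double coset of `w` only depends on where `w⁻¹(1)` lies among these three sets.
-/

open Equiv MulAction
open scoped Pointwise

theorem mem_doubleCoset_stabilizer_iff {G X : Type*} [Group G] [MulAction G X] {K : Subgroup G}
    {x : X} {g g' : G} :
    g' ∈ DoubleCoset.doubleCoset g (stabilizer G x) K ↔ g'⁻¹ • x ∈ orbit K (g⁻¹ • x) := by
  rw [DoubleCoset.mem_doubleCoset, mem_orbit_symm]
  constructor
  · rintro ⟨h, hh, k, hk, rfl⟩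
    refine ⟨⟨k, hk⟩, ?_⟩
    have hx : h⁻¹ • x = x := inv_mem hh
    simp [Subgroup.smul_def, mul_smul, hx]
  · rintro ⟨k, hk : k.1 • g'⁻¹ • x = g⁻¹ • x⟩
    refine ⟨g' * (k : G)⁻¹ * g⁻¹, ?_, k, k.2, by group⟩
    simp [mul_smul, ← hk]

section SignedPerm

variable {α : Type*} [InvolutiveNeg α]

/-- The group of permutations of `α` commuting with negation; for `α = {−n, …, −1, 1, …, n}` this
is the hyperoctahedral group `B_n`. -/
def signedPermGroup (α : Type*) [InvolutiveNeg α] : Subgroup (Perm α) :=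
  Subgroup.centralizer {Equiv.neg α}

theorem mem_signedPermGroup {w : Perm α} : w ∈ signedPermGroup α ↔ ∀ x, w (-x) = -w x := by
  rw [signedPermGroup, Subgroup.mem_centralizer_singleton_iff, Perm.ext_iff]
  rfl

theorem signedPermGroup_smul_neg (w : signedPermGroup α) (x : α) : w • -x = -(w • x) :=
  mem_signedPermGroup.1 w.2 x

theorem swap_neg_mem_signedPermGroup [DecidableEq α] (a : α) : swap a (-a) ∈ signedPermGroup α := by
  rw [signedPermGroup, Subgroup.mem_centralizer_singleton_iff, mul_swap_eq_swap_mul]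
  simp [swap_comm]

theorem commute_swap_swap_neg [DecidableEq α] {a b : α} (ha : -a ≠ a) (hb : -b ≠ b) :
    Commute (swap a b) (swap (-a) (-b)) := by
  rcases eq_or_ne a b with rfl | hab
  · simp
  rcases eq_or_ne b (-a) with rfl | hba
  · simp [swap_comm]
  · have hab' : a ≠ -b := fun h => hba (by simp [h])
    exact (Perm.disjoint_swap_swap (by simp [hab, hba, hab', ha.symm, hb.symm])).commute

theorem swap_mul_swap_neg_mem_signedPermGroup [DecidableEq α] {a b : α} (ha : -a ≠ a)
    (hb : -b ≠ b) : swap a b * swap (-a) (-b) ∈ signedPermGroup α := by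
  rw [signedPermGroup, Subgroup.mem_centralizer_singleton_iff]
  calc swap a b * swap (-a) (-b) * Equiv.neg α
      = swap (-a) (-b) * swap a b * Equiv.neg α := by rw [(commute_swap_swap_neg ha hb).eq]
    _ = Equiv.neg α * (swap a b * swap (-a) (-b)) := by
      rw [← mul_assoc, mul_swap_eq_swap_mul (Equiv.neg α), mul_assoc _ (Equiv.neg α),
        mul_swap_eq_swap_mul (Equiv.neg α)]
      simp [mul_assoc]

theorem mem_orbit_signedPermGroup_stabilizer_iff {S : Set α} {a b : α} (ha : -a ≠ a)
    (hb : -b ≠ b) :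
    b ∈ orbit (stabilizer (signedPermGroup α) S) a ↔ (a ∈ S ↔ b ∈ S) ∧ (-a ∈ S ↔ -b ∈ S) := by
  classical
  constructor
  · rintro ⟨⟨k, hk⟩, rfl⟩
    have hkS := mem_stabilizer_set.1 hk
    simp [Subgroup.mk_smul, ← signedPermGroup_smul_neg, hkS]
  · rintro ⟨hS, hS_neg⟩
    suffices ∃ k ∈ signedPermGroup α, k ∈ stabilizer (Perm α) S ∧ k a = b by
      obtain ⟨k, hk, hkS, hka⟩ := this
      exact ⟨⟨⟨k, hk⟩, hkS⟩, hka⟩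
    -- For `b = -a` the product used in the second case is the identity.
    rcases eq_or_ne b (-a) with rfl | hba
    · exact ⟨swap a (-a), swap_neg_mem_signedPermGroup a, swap_mem_stabilizer.2 hS, by simp⟩
    · refine ⟨swap a b * swap (-a) (-b), swap_mul_swap_neg_mem_signedPermGroup ha hb,
        mul_mem (swap_mem_stabilizer.2 hS) (swap_mem_stabilizer.2 hS_neg), ?_⟩
      have hab : a ≠ -b := fun h => hba (by simp [h])
      rw [Perm.mul_apply, swap_apply_of_ne_of_ne ha.symm hab, swap_apply_left]

theorem exists_signedPermGroup_smul_eq {a b : α} (ha : -a ≠ a) (hb : -b ≠ b) :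
    ∃ w : signedPermGroup α, w • a = b := by
  obtain ⟨k, hk⟩ := (mem_orbit_signedPermGroup_stabilizer_iff (S := Set.univ) ha hb).2 (by simp)
  exact ⟨k.1, hk⟩

end SignedPerm

namespace SIdx

variable {n m : ℕ}

instance : InvolutiveNeg (SIdx n) where
  neg_neg x := Subtype.ext (neg_neg x.1)

theorem val_neg (x : SIdx n) : (-x).1 = -x.1 := rfl

theorem neg_ne_self (x : SIdx n) : -x ≠ x := fun h =>
  x.2.1 (neg_eq_self.1 (congrArg Subtype.val h))

/-- The set `{1, …, m}` of signed indices, whose stabilizer in `B_n` is `W_Q`. -/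
def initialSet (n m : ℕ) : Set (SIdx n) := {x | 0 < x.1 ∧ x.1 ≤ (m : ℤ)}

theorem neg_notMem_initialSet {x : SIdx n} (hx : x ∈ initialSet n m) : -x ∉ initialSet n m :=
  fun h => (neg_pos.1 h.1).not_gt hx.1

theorem exists_val_eq_one (hn : 0 < n) : ∃ o : SIdx n, o.1 = 1 :=
  ⟨⟨1, one_ne_zero, by simpa⟩, rfl⟩

theorem mem_initialSet_of_val_eq_one (hm : 0 < m) {o : SIdx n} (ho : o.1 = 1) :
    o ∈ initialSet n m :=
  ⟨by omega, by omega⟩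

end SIdx

section DoubleCosets

open SIdx

variable {n m : ℕ} {o : SIdx n}

theorem isSignedPerm_iff_mem {w : Perm (SIdx n)} : IsSignedPerm w ↔ w ∈ signedPermGroup (SIdx n) :=
  mem_signedPermGroup.symm

theorem isSignedPerm_coe (w : signedPermGroup (SIdx n)) : IsSignedPerm w.1 :=
  isSignedPerm_iff_mem.2 w.2

theorem inWP_coe_iff (ho : o.1 = 1) {h : signedPermGroup (SIdx n)} :
    InWP h.1 ↔ h ∈ stabilizer (signedPermGroup (SIdx n)) o := by
  have val_eq_one_iff {x : SIdx n} : x.1 = 1 ↔ x = o := by rw [← ho]; exact Subtype.ext_iff.symm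
  simp only [InWP, isSignedPerm_coe, true_and, val_eq_one_iff, forall_eq]
  rfl

theorem inWQ_coe_iff {k : signedPermGroup (SIdx n)} :
    InWQ m k.1 ↔ k ∈ stabilizer (signedPermGroup (SIdx n)) (initialSet n m) :=
  and_iff_right (isSignedPerm_coe k)

theorem sameDC_coe_iff_mem_doubleCoset (ho : o.1 = 1) {w w' : signedPermGroup (SIdx n)} :
    SameDC m w.1 w'.1 ↔ w' ∈ DoubleCoset.doubleCoset w (stabilizer (signedPermGroup (SIdx n)) o)
      (stabilizer (signedPermGroup (SIdx n)) (initialSet n m)) := by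
  rw [DoubleCoset.mem_doubleCoset]
  constructor
  · rintro ⟨h, k, hh, hk, hw'⟩
    lift h to signedPermGroup (SIdx n) using isSignedPerm_iff_mem.1 hh.1
    lift k to signedPermGroup (SIdx n) using isSignedPerm_iff_mem.1 hk.1
    exact ⟨h, (inWP_coe_iff ho).1 hh, k, inWQ_coe_iff.1 hk, Subtype.ext hw'⟩
  · rintro ⟨h, hh, k, hk, rfl⟩
    exact ⟨h, k, (inWP_coe_iff ho).2 hh, inWQ_coe_iff.2 hk, rfl⟩

theorem exists_val_apply_eq_iff {w : signedPermGroup (SIdx n)} {y : SIdx n} :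
    (∃ j : SIdx n, 0 < j.1 ∧ j.1 ≤ (m : ℤ) ∧ (w.1 j).1 = y.1) ↔ w⁻¹ • y ∈ initialSet n m := by
  constructor
  · rintro ⟨j, hj_pos, hj_le, hwj⟩
    rw [← show w • j = y from Subtype.ext hwj, inv_smul_smul]
    exact ⟨hj_pos, hj_le⟩
  · rintro ⟨h_pos, h_le⟩
    exact ⟨w⁻¹ • y, h_pos, h_le, congrArg Subtype.val (smul_inv_smul w y)⟩

theorem inE2_coe_iff (ho : o.1 = 1) {w : signedPermGroup (SIdx n)} :
    InE2 m w.1 ↔ w⁻¹ • o ∈ initialSet n m := by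
  rw [← exists_val_apply_eq_iff, ho, InE2]

theorem inE0_coe_iff (ho : o.1 = 1) {w : signedPermGroup (SIdx n)} :
    InE0 m w.1 ↔ -(w⁻¹ • o) ∈ initialSet n m := by
  rw [← signedPermGroup_smul_neg, ← exists_val_apply_eq_iff, val_neg, ho, InE0]

theorem inE1_iff_not_inE0_and_not_inE2 {w : Perm (SIdx n)} :
    InE1 m w ↔ ¬InE0 m w ∧ ¬InE2 m w := by
  simp only [InE0, InE1, InE2, not_exists, not_and]
  grind

theorem IsSignedPerm.not_inE0_and_inE2 {w : Perm (SIdx n)} (hw : IsSignedPerm w) :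
    ¬(InE0 m w ∧ InE2 m w) := by
  rintro ⟨⟨i, hi_pos, hi_le, hwi⟩, ⟨j, hj_pos, hj_le, hwj⟩⟩
  have hw_neg : w (-i) = w j := by
    rw [hw]
    exact Subtype.ext (by rw [val_neg, hwi, hwj, neg_neg])
  exact neg_notMem_initialSet ⟨hi_pos, hi_le⟩ (w.injective hw_neg ▸ ⟨hj_pos, hj_le⟩)

theorem sameDC_iff (hn : 0 < n) {w w' : Perm (SIdx n)} (hw : IsSignedPerm w)
    (hw' : IsSignedPerm w') :
    SameDC m w w' ↔ (InE0 m w ↔ InE0 m w') ∧ (InE2 m w ↔ InE2 m w') := by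
  lift w to signedPermGroup (SIdx n) using isSignedPerm_iff_mem.1 hw
  lift w' to signedPermGroup (SIdx n) using isSignedPerm_iff_mem.1 hw'
  obtain ⟨o, ho⟩ := exists_val_eq_one hn
  rw [sameDC_coe_iff_mem_doubleCoset ho, mem_doubleCoset_stabilizer_iff,
    mem_orbit_signedPermGroup_stabilizer_iff (neg_ne_self _) (neg_ne_self _), inE0_coe_iff ho,
    inE0_coe_iff ho, inE2_coe_iff ho, inE2_coe_iff ho, and_comm]

theorem exists_inE0 (hn : 0 < n) (hm : 0 < m) :
    ∃ w : Perm (SIdx n), IsSignedPerm w ∧ InE0 m w := by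
  obtain ⟨o, ho⟩ := exists_val_eq_one hn
  obtain ⟨ho_pos, ho_le⟩ := mem_initialSet_of_val_eq_one hm ho
  obtain ⟨w, hw⟩ := exists_signedPermGroup_smul_eq (neg_ne_self o) (neg_ne_self (-o))
  have hwo : (w.1 o).1 = -1 := by rw [← ho, ← val_neg, ← hw]; rfl
  exact ⟨w, isSignedPerm_coe w, o, ho_pos, ho_le, hwo⟩

theorem exists_inE2 (hn : 0 < n) (hm : 0 < m) :
    ∃ w : Perm (SIdx n), IsSignedPerm w ∧ InE2 m w := by
  obtain ⟨o, ho⟩ := exists_val_eq_one hn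
  obtain ⟨ho_pos, ho_le⟩ := mem_initialSet_of_val_eq_one hm ho
  exact ⟨1, fun _ => rfl, o, ho_pos, ho_le, ho⟩

theorem exists_inE1 (hmn : m < n) :
    ∃ w : Perm (SIdx n), IsSignedPerm w ∧ InE1 m w := by
  obtain ⟨o, ho⟩ := exists_val_eq_one (Nat.zero_lt_of_lt hmn)
  let last : SIdx n := ⟨n, by omega, by simp⟩
  obtain ⟨w, hw⟩ := exists_signedPermGroup_smul_eq (neg_ne_self last) (neg_ne_self o)
  refine ⟨w, isSignedPerm_coe w, ?_⟩
  rw [inE1_iff_not_inE0_and_not_inE2, inE0_coe_iff ho, inE2_coe_iff ho,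
    inv_smul_eq_iff.2 hw.symm]
  have hlast : last.1 = n := rfl
  constructor
  · rintro ⟨h_pos, -⟩
    rw [val_neg] at h_pos
    omega
  · rintro ⟨-, h_le⟩
    omega

end DoubleCosets

/-- For `n ≥ 2`, `1 ≤ m < n`, the sets `E_0`, `E_1`, `E_2` are nonempty, each is a single
`(W_P, W_Q)` double coset, and they partition `B_n` (so they are exactly the double cosets). -/
theorem stmt_9 (n m : ℕ) (hn : 2 ≤ n) (hm1 : 1 ≤ m) (hmn : m < n) :
    ((∃ w : Equiv.Perm (SIdx n), IsSignedPerm w ∧ InE0 m w) ∧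
     (∃ w : Equiv.Perm (SIdx n), IsSignedPerm w ∧ InE1 m w) ∧
     (∃ w : Equiv.Perm (SIdx n), IsSignedPerm w ∧ InE2 m w)) ∧
    ((∀ w w' : Equiv.Perm (SIdx n), IsSignedPerm w → IsSignedPerm w' →
        InE0 m w → (InE0 m w' ↔ SameDC m w w')) ∧
     (∀ w w' : Equiv.Perm (SIdx n), IsSignedPerm w → IsSignedPerm w' →
        InE1 m w → (InE1 m w' ↔ SameDC m w w')) ∧
     (∀ w w' : Equiv.Perm (SIdx n), IsSignedPerm w → IsSignedPerm w' →
        InE2 m w → (InE2 m w' ↔ SameDC m w w'))) ∧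
    ((∀ w : Equiv.Perm (SIdx n), IsSignedPerm w → (InE0 m w ∨ InE1 m w ∨ InE2 m w)) ∧
     (∀ w : Equiv.Perm (SIdx n), IsSignedPerm w →
        ¬(InE0 m w ∧ InE1 m w) ∧ ¬(InE0 m w ∧ InE2 m w) ∧ ¬(InE1 m w ∧ InE2 m w))) := by
  have hn_pos : 0 < n := Nat.zero_lt_of_lt hn
  have not_both {w : Equiv.Perm (SIdx n)} (hw : IsSignedPerm w) : ¬(InE0 m w ∧ InE2 m w) :=
    hw.not_inE0_and_inE2
  refine ⟨⟨exists_inE0 hn_pos hm1, exists_inE1 hmn, exists_inE2 hn_pos hm1⟩, ?_⟩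
  simp only [inE1_iff_not_inE0_and_not_inE2]
  refine ⟨⟨?_, ?_, ?_⟩, ?_, ?_⟩
  · intro w w' hw hw' hE0
    rw [sameDC_iff hn_pos hw hw']
    have := not_both hw
    have := not_both hw'
    tauto
  · intro w w' hw hw' hE1
    rw [sameDC_iff hn_pos hw hw']
    tauto
  · intro w w' hw hw' hE2
    rw [sameDC_iff hn_pos hw hw']
    have := not_both hw
    have := not_both hw'
    tauto
  · tauto
  · intro w hw
    have := not_both hw
    tauto
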